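/- arXiv:math/0302293 — 2 statements merged into one kernel-verified Lean document; each statement's English description precedes it below -/
import Mathlib

section
/- For all integers n ≥ 2 and k ≥ 1, ||R_{k,n} − C_{k,n}|| = (1/k^n)·( k^n − k^{n+1}/n + (n+1)·Σ_{s=1}^{k−1} s^n − k·(n−1)·Σ_{s=1}^{k−1} s^{n−1} ). -/
/-- Number of descents of a permutation of `{1,...,n}` (here `Fin n`, 0-indexed):
the number of positions `i` with `1 ≤ i ≤ n-1` and `π(i) > π(i+1)`. -/
def numDescents (n : ℕ) (π : Equiv.Perm (Fin n)) : ℕ :=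
  ((Finset.range (n - 1)).filter (fun i =>
    ∃ h : i + 1 < n, π ⟨i + 1, h⟩ < π ⟨i, Nat.lt_of_succ_lt h⟩)).card

/-- `π` has a cyclic descent at `n` if `π(n) > π(1)`. -/
def hasCyclicDescentAtLast (n : ℕ) (π : Equiv.Perm (Fin n)) : Prop :=
  ∃ h : 0 < n, π ⟨0, h⟩ < π ⟨n - 1, Nat.sub_lt h Nat.one_pos⟩

instance (n : ℕ) (π : Equiv.Perm (Fin n)) : Decidable (hasCyclicDescentAtLast n π) :=
  exists_prop_decidable _

/-- Number of cyclic descents: `d(π)+1` if `π` has a cyclic descent at `n`, else `d(π)`. -/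
def numCyclicDescents (n : ℕ) (π : Equiv.Perm (Fin n)) : ℕ :=
  numDescents n π + if hasCyclicDescentAtLast n π then 1 else 0

/-- The k-riffle shuffle measure `R_{k,n}(π) = binom(n+k-d(π)-1, n) / k^n`. -/
noncomputable def riffle (k n : ℕ) (π : Equiv.Perm (Fin n)) : ℝ :=
  (Nat.choose (n + k - numDescents n π - 1) n : ℝ) / (k : ℝ) ^ n

/-- The cut-then-k-riffle-shuffle measure
`C_{k,n}(π) = binom(n+k-cd(π)-1, n-1) / (n·k^(n-1))`. -/
noncomputable def cutRiffle (k n : ℕ) (π : Equiv.Perm (Fin n)) : ℝ :=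
  (Nat.choose (n + k - numCyclicDescents n π - 1) (n - 1) : ℝ) / ((n : ℝ) * (k : ℝ) ^ (n - 1))

theorem abs_of_nonneg_eq {a b : ℝ} (h : a = b) (hb : 0 ≤ b) : |a| = b := by
  rw [h, abs_of_nonneg hb]

/-- The set of cyclic descents, as a subset of `Fin (m+1)`. -/
def cycSet (m : ℕ) (π : Equiv.Perm (Fin (m+1))) : Finset (Fin (m+1)) :=
  Finset.univ.filter (fun i => π (i+1) < π i)

theorem cyc_iff (m : ℕ) (π : Equiv.Perm (Fin (m+1))) :
    hasCyclicDescentAtLast (m+1) π ↔ Fin.last m ∈ cycSet m π := by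
  simp only [hasCyclicDescentAtLast, cycSet, Finset.mem_filter, Finset.mem_univ, true_and,
    Fin.last_add_one]
  constructor
  · rintro ⟨_, h⟩
    exact h
  · intro h
    exact ⟨Nat.succ_pos _, h⟩

theorem numDescents_eq_sum (m : ℕ) (π : Equiv.Perm (Fin (m+1))) :
    numDescents (m+1) π = ∑ i : Fin m, if π i.succ < π i.castSucc then 1 else 0 := by
  unfold numDescents
  rw [Finset.card_filter, Nat.add_sub_cancel, Finset.sum_range]
  refine Finset.sum_congr rfl fun i _ => ?_
  congr 1
  apply propext
  constructor
  · rintro ⟨_, h⟩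
    exact h
  · intro h
    exact ⟨by omega, h⟩

theorem numCyc_eq (m : ℕ) (π : Equiv.Perm (Fin (m+1))) :
    numCyclicDescents (m+1) π = (cycSet m π).card := by
  unfold numCyclicDescents
  rw [numDescents_eq_sum, cycSet, Finset.card_filter, Fin.sum_univ_castSucc]
  congr 1
  · refine Finset.sum_congr rfl fun i _ => ?_
    rw [Fin.coeSucc_eq_succ]
  · have := cyc_iff m π
    simp only [cycSet, Finset.mem_filter, Finset.mem_univ, true_and] at this
    simp only [this]

/-- Rotation by `p`. -/
theorem cycSet_rot (m : ℕ) (π : Equiv.Perm (Fin (m+1))) (p i : Fin (m+1)) :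
    i ∈ cycSet m (π * Equiv.addRight p) ↔ i + p ∈ cycSet m π := by
  simp [cycSet, add_right_comm]

theorem card_cycSet_rot (m : ℕ) (π : Equiv.Perm (Fin (m+1))) (p : Fin (m+1)) :
    (cycSet m (π * Equiv.addRight p)).card = (cycSet m π).card := by
  refine Finset.card_equiv (Equiv.addRight p) fun i => ?_
  rw [cycSet_rot]; rfl

theorem card_cycSet_decompose (q : ℕ) (σ : Equiv.Perm (Fin (q+1))) :
    (cycSet (q+1) (Equiv.Perm.decomposeFin.symm (0, σ))).card = numDescents (q+1) σ + 1 := by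
  rw [← numCyc_eq, numCyclicDescents, if_pos, numDescents_eq_sum, numDescents_eq_sum,
    Fin.sum_univ_succ]
  · have h0 : ¬ (Equiv.Perm.decomposeFin.symm ((0 : Fin (q+2)), σ) (Fin.succ 0)
        < Equiv.Perm.decomposeFin.symm ((0 : Fin (q+2)), σ) (Fin.castSucc 0)) := by
      simp
    rw [if_neg h0, zero_add]
    congr 1
    refine Finset.sum_congr rfl fun i _ => ?_
    rw [← Fin.succ_castSucc]
    simp
  · refine ⟨by omega, ?_⟩
    have e : (⟨q + 1 + 1 - 1, by omega⟩ : Fin (q+1+1)) = Fin.succ (Fin.last q) := rfl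
    have e0 : (⟨0, by omega⟩ : Fin (q+1+1)) = 0 := rfl
    rw [e, e0, Equiv.Perm.decomposeFin_symm_apply_succ, Equiv.Perm.decomposeFin_symm_apply_zero,
      Equiv.swap_self]
    exact Fin.succ_pos _

theorem sum_perm_rot (m : ℕ) (g : Equiv.Perm (Fin (m+1)) → ℝ) :
    ∑ π, g π = ∑ σ : Equiv.Perm (Fin m), ∑ p : Fin (m+1),
      g (Equiv.Perm.decomposeFin.symm (0, σ) * Equiv.addRight p) := by
  have h1 : ∀ π : Equiv.Perm (Fin (m+1)), g π = ∑ p : Fin (m+1), if π (-p) = 0 then g π else 0 := by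
    intro π
    rw [Finset.sum_eq_single (-(π.symm 0))]
    · simp
    · intro b _ hb
      rw [if_neg]
      intro h
      apply hb
      rw [← h]; simp
    · simp
  calc ∑ π, g π = ∑ π : Equiv.Perm (Fin (m+1)), ∑ p : Fin (m+1), if π (-p) = 0 then g π else 0 :=
        Finset.sum_congr rfl fun π _ => h1 π
    _ = ∑ p : Fin (m+1), ∑ π : Equiv.Perm (Fin (m+1)), if π (-p) = 0 then g π else 0 :=
        Finset.sum_comm
    _ = ∑ p : Fin (m+1), ∑ σ : Equiv.Perm (Fin m),
          g (Equiv.Perm.decomposeFin.symm (0, σ) * Equiv.addRight p) := by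
        refine Finset.sum_congr rfl fun p _ => ?_
        rw [← Equiv.sum_comp (Equiv.mulRight (Equiv.addRight p)),
          ← Equiv.sum_comp Equiv.Perm.decomposeFin.symm, Fintype.sum_prod_type,
          Finset.sum_eq_single 0]
        · refine Finset.sum_congr rfl fun σ _ => ?_
          simp
        · intro b _ hb
          refine Finset.sum_eq_zero fun σ _ => ?_
          simp [hb]
        · simp
    _ = _ := Finset.sum_comm

theorem numDescents_le (q : ℕ) (σ : Equiv.Perm (Fin (q+1))) : numDescents (q+1) σ ≤ q := by
  unfold numDescents
  refine (Finset.card_filter_le _ _).trans ?_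
  simp

/-- Main counting lemma. -/
theorem sum_cyc (q : ℕ) (F G : ℕ → ℝ) :
    ∑ π : Equiv.Perm (Fin (q+2)), (if hasCyclicDescentAtLast (q+2) π
        then F (numCyclicDescents (q+2) π) else G (numCyclicDescents (q+2) π))
      = ∑ σ : Equiv.Perm (Fin (q+1)), (((numDescents (q+1) σ : ℝ) + 1) * F (numDescents (q+1) σ + 1)
          + ((q : ℝ) + 1 - numDescents (q+1) σ) * G (numDescents (q+1) σ + 1)) := by
  rw [sum_perm_rot]
  refine Finset.sum_congr rfl fun σ _ => ?_
  have hc := card_cycSet_decompose q σ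
  simp only [numCyc_eq (q+1), cyc_iff (q+1), card_cycSet_rot, hc, cycSet_rot]
  have hs := Equiv.sum_comp (Equiv.addLeft (Fin.last (q+1)))
    (fun p => if p ∈ cycSet (q+1) (Equiv.Perm.decomposeFin.symm (0, σ)) then
      F (numDescents (q+1) σ + 1) else G (numDescents (q+1) σ + 1))
  simp only [Equiv.coe_addLeft] at hs
  refine Eq.trans (Finset.sum_congr rfl fun p _ => by congr) (hs.trans ?_)
  rw [Finset.sum_ite, Finset.sum_const, Finset.sum_const, nsmul_eq_mul, nsmul_eq_mul]
  have hf : Finset.univ.filter (fun p => p ∈ cycSet (q+1) (Equiv.Perm.decomposeFin.symm (0, σ)))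
      = cycSet (q+1) (Equiv.Perm.decomposeFin.symm (0, σ)) := by ext; simp
  have hf' : Finset.univ.filter (fun p => p ∉ cycSet (q+1) (Equiv.Perm.decomposeFin.symm (0, σ)))
      = (cycSet (q+1) (Equiv.Perm.decomposeFin.symm (0, σ)))ᶜ := by ext; simp
  have hle := numDescents_le q σ
  rw [hf, hf', Finset.card_compl, hc, Fintype.card_fin, Nat.cast_sub (by omega)]
  push_cast
  ring

theorem choose_succ_real (N r : ℕ) :
    (Nat.choose N (r+1) : ℝ) * (r+1) = Nat.choose N r * ((N : ℝ) - r) := by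
  have h := Nat.choose_succ_right_eq N r
  rcases le_or_gt r N with hr | hr
  · have h' : ((Nat.choose N (r+1) * (r+1) : ℕ) : ℝ) = ((Nat.choose N r * (N - r) : ℕ) : ℝ) := by
      rw [h]
    push_cast [Nat.cast_sub hr] at h'
    exact h'
  · rw [Nat.choose_eq_zero_of_lt hr, Nat.choose_eq_zero_of_lt (by omega)]; simp

theorem choose_succ_succ_real (N r : ℕ) :
    (Nat.choose (N+1) (r+1) : ℝ) * (r+1) = Nat.choose N r * ((N : ℝ) + 1) := by
  have h := Nat.add_one_mul_choose_eq N r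
  have h' : (((N+1) * Nat.choose N r : ℕ) : ℝ) = ((Nat.choose (N+1) (r+1) * (r+1) : ℕ) : ℝ) := by
    rw [h]
  push_cast at h'
  linarith

/-- The Worpitzky identity. -/
theorem worpitzky (q k : ℕ) :
    ∑ σ : Equiv.Perm (Fin (q+1)), (Nat.choose (q + k - numDescents (q+1) σ) (q+1) : ℝ)
      = (k : ℝ)^(q+1) := by
  induction q with
  | zero =>
    have h : ∀ σ : Equiv.Perm (Fin (0+1)), numDescents (0+1) σ = 0 := fun σ =>
      Nat.le_zero.mp (numDescents_le 0 σ)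
    simp [h]
  | succ q ih =>
    have h := sum_cyc q (fun c => (Nat.choose (q + 1 + k - (c - 1)) (q+2) : ℝ))
      (fun c => (Nat.choose (q + 1 + k - c) (q+2) : ℝ))
    have h1 : ∀ π : Equiv.Perm (Fin (q+2)),
        (Nat.choose (q + 1 + k - numDescents (q+2) π) (q+2) : ℝ) =
        if hasCyclicDescentAtLast (q+2) π
        then (Nat.choose (q + 1 + k - (numCyclicDescents (q+2) π - 1)) (q+2) : ℝ)
        else (Nat.choose (q + 1 + k - numCyclicDescents (q+2) π) (q+2) : ℝ) := by
      intro π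
      unfold numCyclicDescents
      split_ifs <;> simp
    rw [Finset.sum_congr rfl fun π _ => h1 π]
    refine h.trans ?_
    rw [pow_succ, ← ih, Finset.sum_mul]
    refine Finset.sum_congr rfl fun σ _ => ?_
    have hd := numDescents_le q σ
    generalize numDescents (q+1) σ = d at *
    obtain ⟨N, hN⟩ : ∃ N, q + k = N + d := ⟨q + k - d, by omega⟩
    have e1 : q + 1 + k - (d + 1 - 1) = N + 1 := by omega
    have e2 : q + 1 + k - (d + 1) = N := by omega
    have e3 : q + k - d = N := by omega
    have a := choose_succ_succ_real N (q+1)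
    have b := choose_succ_real N (q+1)
    have hk : (k : ℝ) = N + d - q := by
      have : ((q + k : ℕ) : ℝ) = ((N + d : ℕ) : ℝ) := by rw [hN]
      push_cast at this; linarith
    simp only [e1, e2, e3]
    have hq : ((q : ℝ) + 1 + 1) ≠ 0 := by positivity
    apply mul_right_cancel₀ hq
    push_cast at a b
    rw [hk]
    linear_combination (d + 1 : ℝ) * a + ((q : ℝ) + 1 - d) * b

theorem choose_identity (q M d k : ℕ) (hd : d ≤ q) (hM : M + d = q + k) :
    ((d : ℝ) + 1) * ((q : ℝ) + 1 - d) * ((Nat.choose (M+2) (q+1) : ℝ)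
        - 2 * Nat.choose (M+1) (q+1) + Nat.choose M (q+1))
      = ((k : ℝ) + 2) * ((q : ℝ) - k) * Nat.choose (M+2) (q+1)
        + (2 * ((k : ℝ)+1)^2 - ((q : ℝ)+1)*((q : ℝ)+2)) * Nat.choose (M+1) (q+1)
        - (k : ℝ) * ((k : ℝ) + q + 2) * Nat.choose M (q+1) := by
  have hk : (k : ℝ) = M + d - q := by
    have : ((M + d : ℕ) : ℝ) = ((q + k : ℕ) : ℝ) := by rw [hM]
    push_cast at this; linarith
  rcases q with _ | r
  · obtain rfl : d = 0 := by omega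
    simp only [zero_add, Nat.choose_one_right]
    push_cast at *
    rw [hk]; ring
  · have a := choose_succ_real M r
    have b := choose_succ_real M (r+1)
    have c1 : (Nat.choose (M+1) (r+1+1) : ℝ) = Nat.choose M (r+1) + Nat.choose M (r+1+1) := by
      rw [Nat.choose_succ_succ]; push_cast; ring
    have c2 : (Nat.choose (M+2) (r+1+1) : ℝ)
        = Nat.choose M r + 2 * Nat.choose M (r+1) + Nat.choose M (r+1+1) := by
      rw [Nat.choose_succ_succ (M+1), Nat.choose_succ_succ M r, Nat.choose_succ_succ M]
      push_cast; ring
    have h1 : ((r : ℝ) + 1) ≠ 0 := by positivity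
    have h2 : ((r : ℝ) + 2) ≠ 0 := by positivity
    have a' : (Nat.choose M (r+1) : ℝ) = Nat.choose M r * ((M : ℝ) - r) / (r+1) := by
      field_simp; linarith
    have b' : (Nat.choose M (r+1+1) : ℝ) =
        Nat.choose M r * ((M : ℝ) - r) / (r+1) * ((M : ℝ) - r - 1) / (r+2) := by
      rw [← a']
      push_cast at b
      field_simp; linarith
    rw [c1, c2, b', a', hk]
    push_cast
    field_simp
    ring

theorem weighted_sum (q k : ℕ) :
    ∑ σ : Equiv.Perm (Fin (q+1)), ((numDescents (q+1) σ : ℝ) + 1) *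
        ((q : ℝ) + 1 - numDescents (q+1) σ) *
        (Nat.choose (q + k - numDescents (q+1) σ) (q+1) : ℝ)
      = ((q : ℝ) + 2) * (k : ℝ)^(q+2) - (k : ℝ)^(q+3)
        + ((q : ℝ) + 2) * ((q : ℝ) + 3) * ∑ s ∈ Finset.range k, (s : ℝ)^(q+2)
        - ((q : ℝ) + 2) * ((q : ℝ) + 1) * k * ∑ s ∈ Finset.range k, (s : ℝ)^(q+1) := by
  induction k using Nat.twoStepInduction with
  | zero =>
    simp only [Finset.range_zero, Finset.sum_empty]
    rw [Finset.sum_eq_zero]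
    · simp
    · intro σ _
      rw [Nat.choose_eq_zero_of_lt (by omega)]; simp
  | one =>
    have h := worpitzky q 1
    have : ∀ σ : Equiv.Perm (Fin (q+1)), ((numDescents (q+1) σ : ℝ) + 1) *
        ((q : ℝ) + 1 - numDescents (q+1) σ) *
        (Nat.choose (q + 1 - numDescents (q+1) σ) (q+1) : ℝ)
        = ((q : ℝ) + 1) * (Nat.choose (q + 1 - numDescents (q+1) σ) (q+1) : ℝ) := by
      intro σ
      rcases Nat.eq_zero_or_pos (numDescents (q+1) σ) with h0 | h0
      · rw [h0]; simp
      · rw [Nat.choose_eq_zero_of_lt (by omega)]; simp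
    rw [Finset.sum_congr rfl fun σ _ => this σ, ← Finset.mul_sum, h]
    simp
    ring
  | more k ih0 ih1 =>
    have key : ∀ σ : Equiv.Perm (Fin (q+1)), ((numDescents (q+1) σ : ℝ) + 1) *
        ((q : ℝ) + 1 - numDescents (q+1) σ) *
        (Nat.choose (q + (k+2) - numDescents (q+1) σ) (q+1) : ℝ)
        = 2 * (((numDescents (q+1) σ : ℝ) + 1) *
          ((q : ℝ) + 1 - numDescents (q+1) σ) *
          (Nat.choose (q + (k+1) - numDescents (q+1) σ) (q+1) : ℝ))
        - (((numDescents (q+1) σ : ℝ) + 1) *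
          ((q : ℝ) + 1 - numDescents (q+1) σ) *
          (Nat.choose (q + k - numDescents (q+1) σ) (q+1) : ℝ))
        + ((k : ℝ) + 2) * ((q : ℝ) - k) * (Nat.choose (q + (k+2) - numDescents (q+1) σ) (q+1) : ℝ)
        + (2 * ((k : ℝ)+1)^2 - ((q : ℝ)+1)*((q : ℝ)+2)) *
          (Nat.choose (q + (k+1) - numDescents (q+1) σ) (q+1) : ℝ)
        - (k : ℝ) * ((k : ℝ) + q + 2) * (Nat.choose (q + k - numDescents (q+1) σ) (q+1) : ℝ) := by
      intro σ
      have hd := numDescents_le q σ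
      generalize numDescents (q+1) σ = d at *
      have e1 : q + (k+2) - d = (q + k - d) + 2 := by omega
      have e2 : q + (k+1) - d = (q + k - d) + 1 := by omega
      rw [e1, e2]
      have := choose_identity q (q + k - d) d k hd (by omega)
      linear_combination this
    rw [Finset.sum_congr rfl fun σ _ => key σ, Finset.sum_sub_distrib, Finset.sum_add_distrib,
      Finset.sum_add_distrib, Finset.sum_sub_distrib, ← Finset.mul_sum, ← Finset.mul_sum,
      ← Finset.mul_sum, ← Finset.mul_sum, worpitzky, worpitzky, worpitzky, ih0, ih1,
      Finset.sum_range_succ _ (k+1), Finset.sum_range_succ _ (k+1),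
      Finset.sum_range_succ _ k, Finset.sum_range_succ _ k]
    push_cast
    ring

theorem sum_Icc_eq_range (k r : ℕ) :
    ∑ s ∈ Finset.Icc 1 (k - 1), (s : ℝ)^(r+1) = ∑ s ∈ Finset.range k, (s : ℝ)^(r+1) := by
  apply Finset.sum_subset
  · intro s hs
    simp only [Finset.mem_Icc, Finset.mem_range] at *
    omega
  · intro s h1 h2
    simp only [Finset.mem_Icc, Finset.mem_range] at *
    obtain rfl : s = 0 := by omega
    simp

theorem abs_term (q k : ℕ) (hk : 1 ≤ k) (π : Equiv.Perm (Fin (q+2))) :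
    |riffle k (q+2) π - cutRiffle k (q+2) π| =
      if hasCyclicDescentAtLast (q+2) π then
        (((q : ℝ) + 2 - numCyclicDescents (q+2) π) *
          Nat.choose (q + 1 + k - numCyclicDescents (q+2) π) (q+1)) / (((q : ℝ) + 2) * (k : ℝ)^(q+2))
      else
        ((numCyclicDescents (q+2) π : ℝ) *
          Nat.choose (q + 1 + k - numCyclicDescents (q+2) π) (q+1))
            / (((q : ℝ) + 2) * (k : ℝ)^(q+2)) := by
  have hd := numDescents_le (q+1) π
  have hk0 : (k : ℝ) ≠ 0 := by positivity
  have hq0 : (q : ℝ) + 2 ≠ 0 := by positivity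
  unfold riffle cutRiffle numCyclicDescents
  change numDescents (q+2) π ≤ q + 1 at hd
  generalize numDescents (q+2) π = d at *
  have hdR : (d : ℝ) ≤ q + 1 := by exact_mod_cast hd
  split_ifs with hc
  · obtain ⟨N, hN⟩ : ∃ N, q + k = N + d := ⟨q + k - d, by omega⟩
    have e1 : q + 2 + k - d - 1 = N + 1 := by omega
    have e2 : q + 2 + k - (d + 1) - 1 = N := by omega
    have e3 : q + 1 + k - (d + 1) = N := by omega
    have e4 : q + 2 - 1 = q + 1 := by omega
    rw [e1, e2, e3, e4]
    have a := choose_succ_succ_real N (q+1)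
    have hkR : (N : ℝ) = q + k - d := by
      have : ((q + k : ℕ) : ℝ) = ((N + d : ℕ) : ℝ) := by rw [hN]
      push_cast at this; linarith
    have a' : (Nat.choose (N+1) (q+2) : ℝ) = Nat.choose N (q+1) * ((N : ℝ)+1) / (q+2) := by
      push_cast at a
      field_simp; linarith
    rw [a', abs_of_nonneg_eq (b := (((q : ℝ) + 2 - ((d + 1 : ℕ) : ℝ)) *
          Nat.choose N (q+1)) / (((q : ℝ) + 2) * (k : ℝ)^(q+2)))]
    · rw [hkR]
      push_cast
      field_simp
      ring
    · push_cast
      have : (0 : ℝ) ≤ (q : ℝ) + 2 - (d + 1) := by linarith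
      positivity
  · obtain ⟨N, hN⟩ : ∃ N, q + 1 + k = N + d := ⟨q + 1 + k - d, by omega⟩
    have e1 : q + 2 + k - d - 1 = N := by omega
    have e2 : q + 2 + k - (d + 0) - 1 = N := by omega
    have e3 : q + 1 + k - (d + 0) = N := by omega
    have e4 : q + 2 - 1 = q + 1 := by omega
    rw [e1, e2, e3, e4]
    have a := choose_succ_real N (q+1)
    have hkR : (N : ℝ) = q + 1 + k - d := by
      have : ((q + 1 + k : ℕ) : ℝ) = ((N + d : ℕ) : ℝ) := by rw [hN]
      push_cast at this; linarith
    have a' : (Nat.choose N (q+2) : ℝ) = Nat.choose N (q+1) * ((N : ℝ)-q-1) / (q+2) := by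
      push_cast at a
      field_simp; linarith
    rw [abs_sub_comm, a', abs_of_nonneg_eq (b := (((d + 0 : ℕ) : ℝ) *
          Nat.choose N (q+1)) / (((q : ℝ) + 2) * (k : ℝ)^(q+2)))]
    · rw [hkR]
      push_cast
      field_simp
      ring
    · positivity

/-- total variation distance between `R_{k,n}` and `C_{k,n}`, second form. -/
theorem totalVariation_riffle_cutRiffle_eq_powerSums (n k : ℕ) (hn : 2 ≤ n) (hk : 1 ≤ k) :
    (1 / 2) * ∑ π : Equiv.Perm (Fin n), |riffle k n π - cutRiffle k n π|
      = (1 / (k : ℝ) ^ n) *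
          ((k : ℝ) ^ n - (k : ℝ) ^ (n + 1) / (n : ℝ)
            + ((n : ℝ) + 1) * ∑ s ∈ Finset.Icc 1 (k - 1), (s : ℝ) ^ n
            - (k : ℝ) * ((n : ℝ) - 1) * ∑ s ∈ Finset.Icc 1 (k - 1), (s : ℝ) ^ (n - 1)) := by
  obtain ⟨q, rfl⟩ : ∃ q, n = q + 2 := ⟨n - 2, by omega⟩
  have e4 : q + 2 - 1 = q + 1 := by omega
  rw [e4, sum_Icc_eq_range k q, sum_Icc_eq_range k (q+1)]
  have hk0 : (k : ℝ) ≠ 0 := by positivity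
  have hq0 : (q : ℝ) + 2 ≠ 0 := by positivity
  have h := sum_cyc q
    (fun c => (((q : ℝ) + 2 - c) * Nat.choose (q + 1 + k - c) (q+1)) / (((q : ℝ) + 2) * (k : ℝ)^(q+2)))
    (fun c => ((c : ℝ) * Nat.choose (q + 1 + k - c) (q+1)) / (((q : ℝ) + 2) * (k : ℝ)^(q+2)))
  have h2 : ∑ π : Equiv.Perm (Fin (q+2)), |riffle k (q+2) π - cutRiffle k (q+2) π|
      = ∑ σ : Equiv.Perm (Fin (q+1)), (2 / (((q : ℝ) + 2) * (k : ℝ)^(q+2))) *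
        (((numDescents (q+1) σ : ℝ) + 1) * ((q : ℝ) + 1 - numDescents (q+1) σ) *
        (Nat.choose (q + k - numDescents (q+1) σ) (q+1) : ℝ)) := by
    refine (Eq.trans ?_ h).trans ?_
    · refine Finset.sum_congr rfl fun π _ => ?_
      exact abs_term q k hk π
    · refine Finset.sum_congr rfl fun σ _ => ?_
      have e : q + 1 + k - (numDescents (q+1) σ + 1) = q + k - numDescents (q+1) σ := by omega
      simp only [e]
      push_cast
      field_simp
      ring
  rw [h2, ← Finset.mul_sum, weighted_sum]
  push_cast
  field_simp
  ring
end

section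
/- For all integers n ≥ 2, k ≥ 1, and any i ∈ {1,…,n}, the distribution of the position of card i under the k-riffle shuffle measure is within total variation distance n/(4k) of uniform: (1/2)·Σ_{j=1}^{n} | Σ_{π ∈ S_n with π(i)=j} R_{k,n}(π) − 1/n | ≤ n/(4k). -/
namespace RiffleAux

open Finset Equiv

lemma numDescents_eq (n : ℕ) (π : Perm (Fin (n + 1))) :
    numDescents (n + 1) π = ∑ p : Fin n, if π p.succ < π p.castSucc then 1 else 0 := by
  unfold numDescents
  rw [Finset.card_filter, Nat.add_sub_cancel, Finset.sum_range]
  refine Finset.sum_congr rfl fun p _ => ?_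
  have h : (p : ℕ) + 1 < n + 1 := by omega
  have : (∃ h : (p : ℕ) + 1 < n + 1, π ⟨p + 1, h⟩ < π ⟨p, Nat.lt_of_succ_lt h⟩) ↔
      π p.succ < π p.castSucc := ⟨fun ⟨_, h⟩ => h, fun h' => ⟨h, h'⟩⟩
  simp only [this]

lemma hasCyc_iff (n : ℕ) (π : Perm (Fin (n + 1))) :
    hasCyclicDescentAtLast (n + 1) π ↔ π (Fin.last n + 1) < π (Fin.last n) := by
  rw [Fin.last_add_one]
  exact ⟨fun ⟨_, h⟩ => h, fun h => ⟨n.succ_pos, h⟩⟩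

lemma numCyc_eq (n : ℕ) (π : Perm (Fin (n + 1))) :
    numCyclicDescents (n + 1) π = ∑ p : Fin (n + 1), if π (p + 1) < π p then 1 else 0 := by
  unfold numCyclicDescents
  rw [numDescents_eq, Fin.sum_univ_castSucc]
  simp only [hasCyc_iff, Fin.coeSucc_eq_succ]

lemma numCyc_rot (n : ℕ) (π : Perm (Fin (n + 1))) (c : Fin (n + 1)) :
    numCyclicDescents (n + 1) (π * Equiv.addRight c) = numCyclicDescents (n + 1) π := by
  rw [numCyc_eq, numCyc_eq]
  refine Fintype.sum_equiv (Equiv.addRight c) _ _ fun p => ?_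
  simp only [Perm.mul_apply, Equiv.coe_addRight, add_right_comm p 1 c]
  rfl

lemma cut_rot (k n : ℕ) (π : Perm (Fin (n + 1))) (c : Fin (n + 1)) :
    cutRiffle k (n + 1) (π * Equiv.addRight c) = cutRiffle k (n + 1) π := by
  unfold cutRiffle
  rw [numCyc_rot]

lemma avg (n : ℕ) (G : Perm (Fin (n + 1)) → Fin (n + 1) → ℝ)
    (hG : ∀ π c p, G (π * Equiv.addRight c) p = G π (p + c)) (i : Fin (n + 1)) :
    ((n + 1 : ℕ) : ℝ) * ∑ π, G π i = ∑ π, ∑ p, G π p := by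
  rw [Finset.sum_comm]
  have : ∀ p ∈ (univ : Finset (Fin (n + 1))), ∑ π, G π p = ∑ π, G π i := by
    intro p _
    refine Fintype.sum_equiv (Equiv.mulRight (Equiv.addRight (p - i))) _ _ fun π => ?_
    simp only [Equiv.coe_mulRight, hG]
    congr 1
    abel
  rw [Finset.sum_congr rfl this]
  simp

lemma cut_nonneg (k n : ℕ) (π : Perm (Fin n)) : 0 ≤ cutRiffle k n π := by
  unfold cutRiffle
  positivity

/-- The weight comparing the two measures. -/
noncomputable def wt (n : ℕ) (π : Perm (Fin (n + 1))) (p : Fin (n + 1)) : ℝ :=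
  (if π (p + 1) < π p then ((n + 1 : ℕ) : ℝ) else 0) - numCyclicDescents (n + 1) π

lemma wt_rot (n : ℕ) (π : Perm (Fin (n + 1))) (c p : Fin (n + 1)) :
    wt n (π * Equiv.addRight c) p = wt n π (p + c) := by
  unfold wt
  rw [numCyc_rot]
  simp only [Perm.mul_apply, Equiv.coe_addRight, add_right_comm p 1 c]

lemma numDescents_le (n : ℕ) (π : Perm (Fin (n + 1))) : numDescents (n + 1) π ≤ n := by
  unfold numDescents
  refine (Finset.card_filter_le _ _).trans ?_
  simp

lemma riffle_sub_cut (k n : ℕ) (hk : 1 ≤ k) (π : Perm (Fin (n + 1))) :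
    riffle k (n + 1) π - cutRiffle k (n + 1) π
      = cutRiffle k (n + 1) π * wt n π (Fin.last n) / k := by
  have hk' : (k : ℝ) ≠ 0 := by positivity
  have hd := numDescents_le n π
  have hn' : ((n : ℝ) + 1) ≠ 0 := by positivity
  unfold riffle cutRiffle wt numCyclicDescents
  simp only [← hasCyc_iff]
  generalize numDescents (n + 1) π = d at *
  by_cases h : hasCyclicDescentAtLast (n + 1) π
  · simp only [h, if_true]
    clear h
    obtain ⟨e, rfl⟩ := Nat.exists_eq_add_of_le hd
    have e1 : d + e + 1 + k - d - 1 = (e + k - 1) + 1 := by omega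
    have e2 : d + e + 1 + k - (d + 1) - 1 = e + k - 1 := by omega
    rw [e1, e2, Nat.add_sub_cancel]
    have := Nat.add_one_mul_choose_eq (e + k - 1) (d + e)
    rw [show e + k - 1 + 1 = e + k by omega] at this ⊢
    have h3 : ((e : ℝ) + k) * ((e + k - 1).choose (d + e) : ℝ)
      = ((e + k).choose (d + e + 1) : ℝ) * ((d : ℝ) + e + 1) := by exact_mod_cast this
    push_cast at hn' ⊢
    field_simp
    rw [pow_succ]
    linear_combination (-(k:ℝ)^(d+e)*k) * h3
  · simp only [h, if_false]
    clear h
    obtain ⟨e, rfl⟩ := Nat.exists_eq_add_of_le hd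
    have e1 : d + e + 1 + k - d - 1 = e + k := by omega
    have e2 : d + e + 1 + k - (d + 0) - 1 = e + k := by omega
    rw [e1, e2, Nat.add_sub_cancel]
    have h3 : ((e + k).choose (d + e + 1) : ℝ) * ((d : ℝ) + e + 1)
        = ((e + k).choose (d + e) : ℝ) * (k - d) := by
      have := Nat.choose_succ_right_eq (e + k) (d + e)
      by_cases hkd : d ≤ k
      · rw [show e + k - (d + e) = k - d by omega] at this
        rw [← Nat.cast_sub hkd]
        exact_mod_cast this
      · rw [Nat.choose_eq_zero_of_lt (by omega), Nat.choose_eq_zero_of_lt (by omega)]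
        simp
    push_cast at hn' ⊢
    field_simp
    rw [pow_succ]
    linear_combination ((k:ℝ)^(d+e)*k) * h3

lemma sum_ite_cyc (n : ℕ) (π : Perm (Fin (n + 1))) (a b : ℝ) :
    ∑ p, (if π (p + 1) < π p then a else b) =
      numCyclicDescents (n + 1) π * a + ((n + 1 : ℕ) - (numCyclicDescents (n + 1) π : ℝ)) * b := by
  have : ∀ p, (if π (p + 1) < π p then a else b)
      = (if π (p + 1) < π p then 1 else 0) * (a - b) + b := by
    intro p; split_ifs <;> ring
  rw [Finset.sum_congr rfl fun p _ => this p, Finset.sum_add_distrib, ← Finset.sum_mul, numCyc_eq]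
  push_cast
  simp
  ring

lemma numCyc_le (n : ℕ) (π : Perm (Fin (n + 1))) : numCyclicDescents (n + 1) π ≤ n + 1 := by
  unfold numCyclicDescents
  have := numDescents_le n π
  split_ifs <;> omega

lemma sum_wt (n : ℕ) (π : Perm (Fin (n + 1))) : ∑ p, wt n π p = 0 := by
  unfold wt
  rw [Finset.sum_sub_distrib, sum_ite_cyc]
  simp
  ring

lemma sum_abs_wt (n : ℕ) (π : Perm (Fin (n + 1))) :
    ∑ p, |wt n π p| ≤ ((n + 1 : ℕ) : ℝ) ^ 2 / 2 := by
  have hle : (numCyclicDescents (n + 1) π : ℝ) ≤ ((n + 1 : ℕ) : ℝ) := by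
    exact_mod_cast numCyc_le n π
  have h0 : (0 : ℝ) ≤ numCyclicDescents (n + 1) π := by positivity
  have : ∀ p, |wt n π p| = if π (p + 1) < π p then
      ((n + 1 : ℕ) : ℝ) - numCyclicDescents (n + 1) π else numCyclicDescents (n + 1) π := by
    intro p
    unfold wt
    split_ifs
    · exact abs_of_nonneg (by linarith)
    · rw [zero_sub, abs_neg, abs_of_nonneg h0]
  rw [Finset.sum_congr rfl fun p _ => this p, sum_ite_cyc]
  nlinarith [sq_nonneg (((n + 1 : ℕ) : ℝ) - 2 * numCyclicDescents (n + 1) π)]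

lemma sum_riffle_eq_cut (k n : ℕ) (hk : 1 ≤ k) :
    ∑ π, riffle k (n + 1) π = ∑ π, cutRiffle k (n + 1) π := by
  have h := avg n (fun π p => cutRiffle k (n + 1) π * wt n π p)
    (fun π c p => by simp only [cut_rot, wt_rot]) (Fin.last n)
  simp only [← Finset.mul_sum, sum_wt, mul_zero, Finset.sum_const_zero] at h
  have h' : ∑ π, cutRiffle k (n + 1) π * wt n π (Fin.last n) = 0 := by
    rcases mul_eq_zero.mp h with h | h
    · exact absurd h (by positivity)
    · exact h
  rw [← sub_eq_zero, ← Finset.sum_sub_distrib,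
    Finset.sum_congr rfl fun π _ => riffle_sub_cut k n hk π, ← Finset.sum_div, h', zero_div]

lemma cut_marginal (k n : ℕ) (i j : Fin (n + 1)) :
    ((n + 1 : ℕ) : ℝ) * ∑ π, (if π i = j then cutRiffle k (n + 1) π else 0)
      = ∑ π, cutRiffle k (n + 1) π := by
  rw [avg n (fun π p => if π p = j then cutRiffle k (n + 1) π else 0)
    (fun π c p => by simp only [cut_rot, Perm.mul_apply, Equiv.coe_addRight]) i]
  refine Finset.sum_congr rfl fun π _ => ?_
  have : ∀ p, (π p = j) ↔ p = π.symm j := fun p => by rw [Equiv.eq_symm_apply]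
  simp [this]

lemma cut_decompose (k m : ℕ) (σ : Perm (Fin (m + 1))) :
    ((m + 1 + 1 : ℕ) : ℝ) * cutRiffle k (m + 1 + 1) (Perm.decomposeFin.symm (0, σ))
      = riffle k (m + 1) σ := by
  set π : Perm (Fin (m + 1 + 1)) := Perm.decomposeFin.symm (0, σ) with hπ
  have h0 : π 0 = 0 := by simp [hπ]
  have hs : ∀ x : Fin (m + 1), π x.succ = (σ x).succ := by intro x; simp [hπ]
  have hd : numDescents (m + 1 + 1) π = numDescents (m + 1) σ := by
    rw [numDescents_eq, numDescents_eq, Fin.sum_univ_succ]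
    simp only [Fin.castSucc_zero, h0, ← Fin.succ_castSucc, hs, Fin.succ_lt_succ_iff]
    simp
  have hc : hasCyclicDescentAtLast (m + 1 + 1) π := by
    rw [hasCyc_iff, Fin.last_add_one, h0, ← Fin.succ_last, hs]
    exact Fin.succ_pos _
  unfold cutRiffle riffle numCyclicDescents
  rw [if_pos hc, hd, show m + 1 + 1 + k - (numDescents (m + 1) σ + 1) - 1
    = m + 1 + k - numDescents (m + 1) σ - 1 by omega, Nat.add_sub_cancel]
  have hn' : ((m + 1 + 1 : ℕ) : ℝ) ≠ 0 := by positivity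
  rw [mul_div_assoc', mul_div_mul_left _ _ hn']

lemma sum_cut_succ (k m : ℕ) :
    ∑ π, cutRiffle k (m + 1 + 1) π = ∑ σ, riffle k (m + 1) σ := by
  rw [← cut_marginal k (m + 1) 0 0, ← Equiv.sum_comp (Perm.decomposeFin (n := m + 1)).symm,
    Fintype.sum_prod_type]
  simp only [Perm.decomposeFin_symm_apply_zero]
  rw [Finset.sum_eq_single 0]
  · simp only [if_true, Finset.mul_sum, cut_decompose]
  · intro b _ hb
    simp [hb]
  · simp

lemma sum_riffle (k m : ℕ) (hk : 1 ≤ k) : ∑ π, riffle k (m + 1) π = 1 := by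
  induction m with
  | zero =>
    have hk' : (k : ℝ) ≠ 0 := by positivity
    simp [riffle, numDescents, hk']
  | succ m ih => rw [sum_riffle_eq_cut k (m + 1) hk, sum_cut_succ, ih]

lemma sum_cut (k n : ℕ) (hk : 1 ≤ k) : ∑ π, cutRiffle k (n + 1) π = 1 := by
  rw [← sum_riffle_eq_cut k n hk, sum_riffle k n hk]

lemma sum_abs (k n : ℕ) (hk : 1 ≤ k) :
    ∑ π, |riffle k (n + 1) π - cutRiffle k (n + 1) π| ≤ ((n + 1 : ℕ) : ℝ) / (2 * k) := by
  have hk' : (0 : ℝ) < k := by positivity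
  have hN : (0 : ℝ) < ((n + 1 : ℕ) : ℝ) := by positivity
  have h := avg n (fun π p => cutRiffle k (n + 1) π * |wt n π p|)
    (fun π c p => by simp only [cut_rot, wt_rot]) (Fin.last n)
  simp only [← Finset.mul_sum] at h
  have h2 : ∑ π, cutRiffle k (n + 1) π * ∑ p, |wt n π p| ≤ ((n + 1 : ℕ) : ℝ) ^ 2 / 2 := by
    calc _ ≤ ∑ π, cutRiffle k (n + 1) π * (((n + 1 : ℕ) : ℝ) ^ 2 / 2) :=
          Finset.sum_le_sum fun π _ =>
            mul_le_mul_of_nonneg_left (sum_abs_wt n π) (cut_nonneg _ _ _)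
      _ = _ := by rw [← Finset.sum_mul, sum_cut k n hk, one_mul]
  have h3 : ∑ π, cutRiffle k (n + 1) π * |wt n π (Fin.last n)| ≤ ((n + 1 : ℕ) : ℝ) / 2 := by
    rw [← h] at h2
    refine le_of_mul_le_mul_left (h2.trans (le_of_eq ?_)) hN
    ring
  have h4 : ∀ π, |riffle k (n + 1) π - cutRiffle k (n + 1) π|
      = cutRiffle k (n + 1) π * |wt n π (Fin.last n)| / k := fun π => by
    rw [riffle_sub_cut k n hk, abs_div, abs_mul, abs_of_nonneg (cut_nonneg _ _ _),
      abs_of_pos hk']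
  rw [Finset.sum_congr rfl fun π _ => h4 π, ← Finset.sum_div, ← div_div]
  exact div_le_div_of_nonneg_right h3 hk'.le

end RiffleAux

/-- under the k-riffle shuffle measure, the distribution of the position
of any single card is within total variation distance `n/(4k)` of uniform. -/
theorem riffle_position_totalVariation_le (n k : ℕ) (hn : 2 ≤ n) (hk : 1 ≤ k) (i : Fin n) :
    (1 / 2) * ∑ j : Fin n,
        |(∑ π ∈ Finset.univ.filter (fun π : Equiv.Perm (Fin n) => π i = j), riffle k n π)
          - 1 / (n : ℝ)|
      ≤ (n : ℝ) / (4 * (k : ℝ)) := by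
  obtain ⟨n, rfl⟩ : ∃ m, n = m + 1 := ⟨n - 1, by omega⟩
  have hN : ((n + 1 : ℕ) : ℝ) ≠ 0 := by positivity
  have key : ∀ j : Fin (n + 1), ∑ π ∈ Finset.univ.filter
      (fun π : Equiv.Perm (Fin (n + 1)) => π i = j), cutRiffle k (n + 1) π
        = 1 / ((n + 1 : ℕ) : ℝ) := by
    intro j
    have h := RiffleAux.cut_marginal k n i j
    rw [RiffleAux.sum_cut k n hk] at h
    rw [Finset.sum_filter, eq_div_iff hN, mul_comm]
    exact h
  have hle : ∑ j : Fin (n + 1),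
        |(∑ π ∈ Finset.univ.filter (fun π : Equiv.Perm (Fin (n + 1)) => π i = j),
          riffle k (n + 1) π) - 1 / ((n + 1 : ℕ) : ℝ)|
      ≤ ∑ π, |riffle k (n + 1) π - cutRiffle k (n + 1) π| := by
    rw [← Finset.sum_fiberwise Finset.univ (fun π : Equiv.Perm (Fin (n + 1)) => π i)]
    refine Finset.sum_le_sum fun j _ => ?_
    rw [← key j, ← Finset.sum_sub_distrib]
    exact Finset.abs_sum_le_sum_abs _ _
  have h := hle.trans (RiffleAux.sum_abs k n hk)
  calc _ ≤ (1 / 2) * (((n + 1 : ℕ) : ℝ) / (2 * k)) := by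
        exact mul_le_mul_of_nonneg_left h (by norm_num)
    _ = _ := by
        rw [div_mul_div_comm, one_mul, ← mul_assoc]
        norm_num
end
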